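/- If α = {a₁, a₂} with a₁ < a₂ is any optimal set of two-means for P, then a₁ = S₁(2/3) = 1/6 and a₂ = S₂(2/3) = 5/6. -/

import Mathlib

open MeasureTheory Set
open scoped ENNReal Classical

noncomputable section

/-- The similarity map `S₁(x) = x/4`. -/
def S1 (x : ℝ) : ℝ := x / 4

/-- The similarity map `S₂(x) = x/2 + 1/2`. -/
def S2 (x : ℝ) : ℝ := x / 2 + 1 / 2

/-- `P` satisfies the self-similarity relation `P = (1/4)·P∘S₁⁻¹ + (3/4)·P∘S₂⁻¹`. -/
def SelfSimilar (P : Measure ℝ) : Prop :=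
  P = (1/4 : ℝ≥0∞) • P.map S1 + (3/4 : ℝ≥0∞) • P.map S2

/-- For a word `σ` over `{1,2}` (encoded as `Fin 2`, `0 ↦ S₁`, `1 ↦ S₂`),
the composition `S_σ = S_{σ₁} ∘ ⋯ ∘ S_{σ_k}`. -/
def Sw : List (Fin 2) → ℝ → ℝ
  | [] => id
  | i :: σ => (if i = 0 then S1 else S2) ∘ Sw σ

/-- `p_σ`, the product of the probabilities `p₁ = 1/4`, `p₂ = 3/4` along `σ`. -/
def pw : List (Fin 2) → ℝ
  | [] => 1
  | i :: σ => (if i = 0 then (1:ℝ)/4 else 3/4) * pw σ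

/-- `s_σ`, the product of the contraction ratios `s₁ = 1/4`, `s₂ = 1/2` along `σ`. -/
def sw : List (Fin 2) → ℝ
  | [] => 1
  | i :: σ => (if i = 0 then (1:ℝ)/4 else 1/2) * sw σ

/-- `c(σ)`, the number of occurrences of the symbol `1` (encoded `0`) in `σ`. -/
def cnt (σ : List (Fin 2)) : ℕ := σ.count 0

/-- The cylinder interval `J_σ = S_σ([0,1])`. -/
def J (σ : List (Fin 2)) : Set ℝ := Sw σ '' Set.Icc 0 1

/-- The distortion error `V(P;α) = ∫ min_{a ∈ α} (x-a)² dP`. -/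
def distortion (P : Measure ℝ) (α : Finset ℝ) : ℝ :=
  ∫ x, sInf ((fun a => (x - a) ^ 2) '' (α : Set ℝ)) ∂P

/-- The `n`-th quantization error `V_n`. -/
def qError (P : Measure ℝ) (n : ℕ) : ℝ :=
  sInf {e | ∃ α : Finset ℝ, α.Nonempty ∧ α.card ≤ n ∧ e = distortion P α}

/-- `α` is an optimal set of `n`-means for `P`. -/
def IsOptimal (P : Measure ℝ) (n : ℕ) (α : Finset ℝ) : Prop :=
  α.Nonempty ∧ α.card ≤ n ∧ distortion P α = qError P n

/-- `q_σ := P(J_σ) · λ(J_σ)²`. -/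
def qnt (P : Measure ℝ) (σ : List (Fin 2)) : ℝ :=
  (P (J σ)).toReal * ((volume (J σ)).toReal) ^ 2

/-!
With `s = (a + b) / 2` and `h = (b - a) / 2`, the distortion of `{a, b}` is
`E (|X - s| - h)² = Var |X - s| + (E |X - s| - h)²`, so the best pair centred at `s` has radius
`E |X - s|`, and `s` has to minimise `Var |X - s| = Var X - 4 * E (s - X)⁺ * E (X - s)⁺`.

For the self-similar `P`, `G s = E (s - X)⁺` satisfies
`G s = G (4 * s) / 16 + 3 / 8 * G (2 * s - 1)`. It is explicit on `[1/4, 1/2]`, and the recursion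
propagates the bound `G s ≤ 3 / 8 * s ^ 2` towards `0`. Together these show that the product of the
two partial moments is less than `1 / 48`, its value at `s = 1 / 2`, for every other `s`.
-/

open ProbabilityTheory

section IteratedFunctionSystem

variable {ι X : Type*} [Fintype ι] [MeasurableSpace X] {μ : Measure X} {w : ι → ℝ≥0∞}
  {f : ι → X → X}

lemma integral_eq_sum_of_eq_sum_smul_map {E : Type*} [NormedAddCommGroup E] [NormedSpace ℝ E]
    (hμ : μ = ∑ i, w i • μ.map (f i)) (hf : ∀ i, Measurable (f i)) {g : X → E}
    (hgm : StronglyMeasurable g) (hg : Integrable g μ) :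
    ∫ x, g x ∂μ = ∑ i, (w i).toReal • ∫ x, g (f i x) ∂μ := by
  rw [hμ, integrable_finsetSum_measure] at hg
  conv_lhs => rw [hμ]
  rw [integral_finsetSum_measure hg]
  simp only [integral_smul_measure,
    integral_map (hf _).aemeasurable hgm.aestronglyMeasurable]

/-- Integrating the invariance relation against `arctan ∘ d`, a bounded strictly increasing function
of `d`, gives `∫ arctan d ≤ ∫ arctan (K * d)`, which forces `d = K * d` almost everywhere. -/
lemma ae_eq_zero_of_comp_le_mul [IsFiniteMeasure μ] (hμ : μ = ∑ i, w i • μ.map (f i))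
    (hw : ∑ i, w i = 1) (hf : ∀ i, Measurable (f i)) {d : X → ℝ} (hd : Measurable d)
    (hd0 : ∀ x, 0 ≤ d x) {K : ℝ} (hK : K < 1) (hdf : ∀ i x, d (f i x) ≤ K * d x) :
    ∀ᵐ x ∂μ, d x = 0 := by
  have hint {u : X → ℝ} (hu : Measurable u) : Integrable (fun x ↦ Real.arctan (u x)) μ :=
    .of_bound (Real.measurable_arctan.comp hu).aestronglyMeasurable (Real.pi / 2) <|
      .of_forall fun x ↦ abs_le.2
        ⟨(Real.neg_pi_div_two_lt_arctan _).le, (Real.arctan_lt_pi_div_two _).le⟩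
  have hKd (x : X) : K * d x ≤ d x := mul_le_of_le_one_left (hd0 x) hK.le
  have hw_real : ∑ i, (w i).toReal = 1 := by
    rw [← ENNReal.toReal_sum (ENNReal.sum_ne_top.1 (by simp [hw])), hw, ENNReal.toReal_one]
  have hle : ∫ x, Real.arctan (d x) ∂μ ≤ ∫ x, Real.arctan (K * d x) ∂μ :=
    calc ∫ x, Real.arctan (d x) ∂μ
        = ∑ i, (w i).toReal • ∫ x, Real.arctan (d (f i x)) ∂μ :=
          integral_eq_sum_of_eq_sum_smul_map hμ hf
            (Real.measurable_arctan.comp hd).stronglyMeasurable (hint hd)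
      _ ≤ ∑ i, (w i).toReal • ∫ x, Real.arctan (K * d x) ∂μ := by
          gcongr with i
          · exact hint (hd.comp (hf i))
          · exact hint (hd.const_mul K)
          · exact fun x ↦ Real.arctan_mono (hdf i x)
      _ = ∫ x, Real.arctan (K * d x) ∂μ := by rw [← Finset.sum_smul, hw_real, one_smul]
  have hzero : ∫ x, (Real.arctan (d x) - Real.arctan (K * d x)) ∂μ = 0 := by
    apply le_antisymm
    · rw [integral_sub (hint hd) (hint (hd.const_mul K))]
      exact sub_nonpos.2 hle
    · exact integral_nonneg fun x ↦ sub_nonneg.2 (Real.arctan_mono (hKd x))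
  rw [integral_eq_zero_iff_of_nonneg
    (fun x ↦ sub_nonneg.2 (Real.arctan_mono (hKd x)))
    ((hint hd).sub (hint (hd.const_mul K)))] at hzero
  filter_upwards [hzero] with x hx
  have hfix : d x = K * d x := Real.arctan_injective (sub_eq_zero.1 hx)
  nlinarith [hd0 x]

end IteratedFunctionSystem

lemma infDist_le_mul_infDist_of_mapsTo {X : Type*} [PseudoMetricSpace X] {K : NNReal} {f : X → X}
    (hf : LipschitzWith K f) {s : Set X} (hs : s.Nonempty) (hfs : MapsTo f s s) (x : X) :
    Metric.infDist (f x) s ≤ K * Metric.infDist x s := by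
  have := hs.to_subtype
  rw [Metric.infDist_eq_iInf (x := x), Real.mul_iInf_of_nonneg K.coe_nonneg]
  exact le_ciInf fun y ↦
    (Metric.infDist_le_dist_of_mem (hfs y.2)).trans (hf.dist_le_mul x y)

lemma ae_mem_of_mapsTo_of_lipschitzWith {ι X : Type*} [Fintype ι] [PseudoMetricSpace X]
    [MeasurableSpace X] [BorelSpace X] {μ : Measure X} [IsFiniteMeasure μ] {w : ι → ℝ≥0∞}
    {f : ι → X → X} (hμ : μ = ∑ i, w i • μ.map (f i)) (hw : ∑ i, w i = 1) {K : NNReal} (hK : K < 1)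
    (hf : ∀ i, LipschitzWith K (f i)) {s : Set X} (hsc : IsClosed s) (hs : s.Nonempty)
    (hfs : ∀ i, MapsTo (f i) s s) : ∀ᵐ x ∂μ, x ∈ s := by
  filter_upwards [ae_eq_zero_of_comp_le_mul hμ hw (fun i ↦ (hf i).continuous.measurable)
    (Metric.continuous_infDist_pt s).measurable (fun _ ↦ Metric.infDist_nonneg) (mod_cast hK)
    fun i ↦ infDist_le_mul_infDist_of_mapsTo (hf i) hs (hfs i)] with x hx
  exact (hsc.mem_iff_infDist_zero hs).2 hx

lemma integral_sub_sq_eq_variance_add_sq {Ω : Type*} [MeasurableSpace Ω] {μ : Measure Ω}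
    [IsProbabilityMeasure μ] {X : Ω → ℝ} (hX : MemLp X 2 μ) (c : ℝ) :
    ∫ ω, (X ω - c) ^ 2 ∂μ = Var[X; μ] + (μ[X] - c) ^ 2 := by
  have hvar := variance_eq_sub (hX.sub (memLp_const c))
  have hmean : ∫ ω, (X ω - c) ∂μ = μ[X] - c := by
    rw [integral_sub (hX.integrable one_le_two) (integrable_const c)]
    simp
  have hshift : Var[X - fun _ ↦ c; μ] = Var[X; μ] := variance_sub_const hX.1 c
  simp only [hshift, Pi.pow_apply, Pi.sub_apply, hmean] at hvar
  linarith

/-- The lower partial moment `E (s - X)⁺` of a random variable `X` with law `μ`. -/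
def lowerPartialMoment (μ : Measure ℝ) (s : ℝ) : ℝ := ∫ x, max (s - x) 0 ∂μ

/-- The upper partial moment `E (X - s)⁺` of a random variable `X` with law `μ`. -/
def upperPartialMoment (μ : Measure ℝ) (s : ℝ) : ℝ := ∫ x, max (x - s) 0 ∂μ

section PartialMoments

variable {μ : Measure ℝ} {s : ℝ}

lemma upperPartialMoment_nonneg (μ : Measure ℝ) (s : ℝ) : 0 ≤ upperPartialMoment μ s :=
  integral_nonneg fun _ ↦ le_max_right _ _

lemma lowerPartialMoment_eq_zero (h : ∀ᵐ x ∂μ, s ≤ x) : lowerPartialMoment μ s = 0 :=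
  integral_eq_zero_of_ae <| h.mono fun _ hx ↦ max_eq_right (sub_nonpos.2 hx)

section IsFiniteMeasure

variable [IsFiniteMeasure μ]

lemma integrable_max_sub_zero (hμ : Integrable (fun x ↦ x) μ) (s : ℝ) :
    Integrable (fun x ↦ max (s - x) 0) μ :=
  ((integrable_const s).sub hμ).pos_part

lemma convexOn_lowerPartialMoment (hμ : Integrable (fun x ↦ x) μ) :
    ConvexOn ℝ univ (lowerPartialMoment μ) := by
  refine ⟨convex_univ, fun s _ t _ a b ha hb hab ↦ ?_⟩
  have hs := (integrable_max_sub_zero hμ s).const_mul a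
  have ht := (integrable_max_sub_zero hμ t).const_mul b
  simp only [lowerPartialMoment, smul_eq_mul]
  rw [← integral_const_mul, ← integral_const_mul, ← integral_add hs ht]
  refine integral_mono (integrable_max_sub_zero hμ _) (hs.add ht) fun x ↦ max_le ?_ (by positivity)
  calc a * s + b * t - x = a * (s - x) + b * (t - x) := by linear_combination x * hab
    _ ≤ a * max (s - x) 0 + b * max (t - x) 0 := by gcongr <;> exact le_max_left _ _

lemma integral_abs_sub (hμ : Integrable (fun x ↦ x) μ) (s : ℝ) :
    ∫ x, |x - s| ∂μ = lowerPartialMoment μ s + upperPartialMoment μ s := by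
  have habs (x : ℝ) : |x - s| = max (s - x) 0 + max (x - s) 0 := by
    rcases le_total x s with h | h
    · rw [abs_of_nonpos (by linarith), max_eq_left (by linarith), max_eq_right (by linarith)]; ring
    · rw [abs_of_nonneg (by linarith), max_eq_right (by linarith), max_eq_left (by linarith)]; ring
  simp only [habs]
  exact integral_add (integrable_max_sub_zero hμ s) (hμ.sub (integrable_const s)).pos_part

end IsFiniteMeasure

variable [IsProbabilityMeasure μ]

lemma upperPartialMoment_eq (hμ : Integrable (fun x ↦ x) μ) (s : ℝ) :
    upperPartialMoment μ s = ∫ x, x ∂μ - s + lowerPartialMoment μ s := by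
  have hmax (x : ℝ) : max (x - s) 0 = x - s + max (s - x) 0 := by
    rw [← max_add_add_left, add_zero, sub_add_sub_cancel, sub_self, max_comm]
  have hsub : Integrable (fun x ↦ x - s) μ := hμ.sub (integrable_const s)
  simp only [upperPartialMoment, hmax]
  rw [integral_add hsub (integrable_max_sub_zero hμ s), integral_sub hμ (integrable_const s)]
  simp [lowerPartialMoment]

lemma lowerPartialMoment_eq_sub_mean (hμ : Integrable (fun x ↦ x) μ) (h : ∀ᵐ x ∂μ, x ≤ s) :
    lowerPartialMoment μ s = s - ∫ x, x ∂μ := by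
  have hmax : ∀ᵐ x ∂μ, max (s - x) 0 = s - x := h.mono fun _ hx ↦ max_eq_left (sub_nonneg.2 hx)
  rw [lowerPartialMoment, integral_congr_ae hmax, integral_sub (integrable_const s) hμ]
  simp

lemma variance_abs_sub (hμ : MemLp id 2 μ) (s : ℝ) :
    Var[fun x ↦ |x - s|; μ] =
      Var[id; μ] - 4 * (lowerPartialMoment μ s * upperPartialMoment μ s) := by
  have hint : Integrable (fun x ↦ x) μ := hμ.integrable one_le_two
  have habs : MemLp (fun x ↦ |x - s|) 2 μ := (hμ.sub (memLp_const s)).abs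
  have hX := integral_sub_sq_eq_variance_add_sq hμ s
  have hY := integral_sub_sq_eq_variance_add_sq habs 0
  simp only [sub_zero, sq_abs, id, integral_abs_sub hint] at hX hY
  have hmean : ∫ x, x ∂μ - s = upperPartialMoment μ s - lowerPartialMoment μ s := by
    rw [upperPartialMoment_eq hint]; ring
  rw [hmean] at hX
  linear_combination hX - hY

end PartialMoments

lemma min_sub_sq_eq_abs_sub_sq {a b : ℝ} (hab : a ≤ b) (x : ℝ) :
    min ((x - a) ^ 2) ((x - b) ^ 2) = (|x - (a + b) / 2| - (b - a) / 2) ^ 2 := by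
  rcases le_total x ((a + b) / 2) with h | h
  · rw [abs_of_nonpos (by linarith), min_eq_left (by nlinarith)]; ring
  · rw [abs_of_nonneg (by linarith), min_eq_right (by nlinarith)]; ring

lemma distortion_pair (μ : Measure ℝ) {a b : ℝ} (hab : a ≤ b) :
    distortion μ {a, b} = ∫ x, (|x - (a + b) / 2| - (b - a) / 2) ^ 2 ∂μ := by
  simp only [distortion, Finset.coe_pair, image_pair, csInf_pair, min_sub_sq_eq_abs_sub_sq hab]

lemma distortion_pair_eq_variance {μ : Measure ℝ} [IsProbabilityMeasure μ] (hμ : MemLp id 2 μ)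
    {a b s : ℝ} (hab : a ≤ b) (hs : (a + b) / 2 = s) :
    distortion μ {a, b} =
      Var[id; μ] - 4 * (lowerPartialMoment μ s * upperPartialMoment μ s) +
        (lowerPartialMoment μ s + upperPartialMoment μ s - (b - a) / 2) ^ 2 := by
  have habs : MemLp (fun x ↦ |x - s|) 2 μ := (hμ.sub (memLp_const s)).abs
  rw [distortion_pair μ hab, hs, integral_sub_sq_eq_variance_add_sq habs, variance_abs_sub hμ,
    integral_abs_sub (hμ.integrable one_le_two)]

lemma distortion_nonneg (μ : Measure ℝ) (α : Finset ℝ) : 0 ≤ distortion μ α :=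
  integral_nonneg fun _ ↦ Real.sInf_nonneg <| forall_mem_image.2 fun _ _ ↦ sq_nonneg _

lemma IsOptimal.distortion_le {μ : Measure ℝ} {n : ℕ} {α β : Finset ℝ} (hα : IsOptimal μ n α)
    (hβ : β.Nonempty) (hcard : β.card ≤ n) : distortion μ α ≤ distortion μ β := by
  rw [hα.2.2]
  refine csInf_le ⟨0, ?_⟩ ⟨β, hβ, hcard, rfl⟩
  rintro _ ⟨γ, -, -, rfl⟩
  exact distortion_nonneg μ γ

lemma le_mul_sq_of_sq_mul_le {g : ℝ → ℝ} {C r y₀ : ℝ} (hr : 1 < r)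
    (hbase : ∀ y, y₀ ≤ y → g y ≤ C * y ^ 2)
    (hscale : ∀ y, 0 < y → y < y₀ → r ^ 2 * g y ≤ g (r * y)) {y : ℝ} (hy : 0 < y) :
    g y ≤ C * y ^ 2 := by
  obtain ⟨n, hn⟩ := pow_unbounded_of_one_lt (y₀ / y) hr
  replace hn : y₀ ≤ r ^ n * y := ((div_lt_iff₀ hy).1 hn).le
  induction n generalizing y with
  | zero => exact hbase y (by simpa using hn)
  | succ n ih =>
    rcases le_or_gt y₀ y with h | h
    · exact hbase y h
    · have hr0 : 0 < r := by linarith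
      refine le_of_mul_le_mul_left ?_ (pow_pos hr0 2)
      calc r ^ 2 * g y ≤ g (r * y) := hscale y hy h
        _ ≤ C * (r * y) ^ 2 := ih (mul_pos hr0 hy) (by rwa [← mul_assoc, ← pow_succ])
        _ = r ^ 2 * (C * y ^ 2) := by ring

lemma lipschitzWith_S1 : LipschitzWith (1 / 4) S1 :=
  .of_dist_le_mul fun x y ↦ by
    have h : S1 x - S1 y = 1 / 4 * (x - y) := by simp only [S1]; ring
    rw [Real.dist_eq, Real.dist_eq, h, abs_mul, abs_of_pos (by norm_num)]
    push_cast
    rfl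

lemma lipschitzWith_S2 : LipschitzWith (1 / 2) S2 :=
  .of_dist_le_mul fun x y ↦ by
    have h : S2 x - S2 y = 1 / 2 * (x - y) := by simp only [S2]; ring
    rw [Real.dist_eq, Real.dist_eq, h, abs_mul, abs_of_pos (by norm_num)]
    push_cast
    rfl

lemma mapsTo_S1_Icc : MapsTo S1 (Icc 0 1) (Icc 0 1) := fun x hx ↦ by
  constructor <;> simp only [S1] <;> linarith [hx.1, hx.2]

lemma mapsTo_S2_Icc : MapsTo S2 (Icc 0 1) (Icc 0 1) := fun x hx ↦ by
  constructor <;> simp only [S2] <;> linarith [hx.1, hx.2]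

namespace SelfSimilar

variable {P : Measure ℝ}

lemma eq_sum_smul_map (hP : SelfSimilar P) :
    P = ∑ i, (![1 / 4, 3 / 4] : Fin 2 → ℝ≥0∞) i • P.map (![S1, S2] i) := by
  rwa [Fin.sum_univ_two]

lemma integral_eq (hP : SelfSimilar P) {g : ℝ → ℝ} (hg : Continuous g) (hgi : Integrable g P) :
    ∫ x, g x ∂P = 1 / 4 * ∫ x, g (S1 x) ∂P + 3 / 4 * ∫ x, g (S2 x) ∂P := by
  have hf : ∀ i, Measurable (![S1, S2] i) := Fin.forall_fin_two.2
    ⟨lipschitzWith_S1.continuous.measurable, lipschitzWith_S2.continuous.measurable⟩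
  simpa [Fin.sum_univ_two] using
    integral_eq_sum_of_eq_sum_smul_map hP.eq_sum_smul_map hf hg.stronglyMeasurable hgi

variable [IsProbabilityMeasure P]

lemma ae_mem_Icc (hP : SelfSimilar P) : ∀ᵐ x ∂P, x ∈ Icc (0 : ℝ) 1 := by
  have hw : ∑ i, (![1 / 4, 3 / 4] : Fin 2 → ℝ≥0∞) i = 1 := by
    simp only [Fin.sum_univ_two, Matrix.cons_val_zero, Matrix.cons_val_one,
      ENNReal.div_add_div_same]
    norm_num [ENNReal.div_self]
  have hquarter : (1 / 4 : NNReal) ≤ 1 / 2 := one_div_le_one_div_of_le two_pos (by norm_num)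
  exact ae_mem_of_mapsTo_of_lipschitzWith hP.eq_sum_smul_map hw (half_lt_self one_pos)
    (Fin.forall_fin_two.2 ⟨lipschitzWith_S1.weaken hquarter, lipschitzWith_S2⟩)
    isClosed_Icc (nonempty_Icc.2 zero_le_one) (Fin.forall_fin_two.2 ⟨mapsTo_S1_Icc, mapsTo_S2_Icc⟩)

lemma memLp_id (hP : SelfSimilar P) (p : ℝ≥0∞) : MemLp id p P :=
  memLp_of_bounded hP.ae_mem_Icc aestronglyMeasurable_id p

lemma integrable_id (hP : SelfSimilar P) : Integrable (fun x ↦ x) P :=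
  memLp_one_iff_integrable.1 (hP.memLp_id 1)

lemma mean_eq (hP : SelfSimilar P) : ∫ x, x ∂P = 2 / 3 := by
  have hrec := hP.integral_eq continuous_id hP.integrable_id
  have hS1 : ∫ x, S1 x ∂P = (∫ x, x ∂P) / 4 := integral_div 4 _
  have hS2 : ∫ x, S2 x ∂P = (∫ x, x ∂P) / 2 + 1 / 2 := by
    simp only [S2]
    rw [integral_add (hP.integrable_id.div_const 2) (integrable_const _), integral_div]
    simp
  simp only [id, hS1, hS2] at hrec
  linarith

lemma lowerPartialMoment_eq_add (hP : SelfSimilar P) (s : ℝ) :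
    lowerPartialMoment P s =
      1 / 16 * lowerPartialMoment P (4 * s) + 3 / 8 * lowerPartialMoment P (2 * s - 1) := by
  have hS1 (x : ℝ) : max (s - S1 x) 0 = 1 / 4 * max (4 * s - x) 0 := by
    rw [mul_max_of_nonneg _ _ (by norm_num), mul_zero, S1]; ring_nf
  have hS2 (x : ℝ) : max (s - S2 x) 0 = 1 / 2 * max (2 * s - 1 - x) 0 := by
    rw [mul_max_of_nonneg _ _ (by norm_num), mul_zero, S2]; ring_nf
  rw [lowerPartialMoment, hP.integral_eq (by fun_prop) (integrable_max_sub_zero hP.integrable_id s)]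
  simp only [hS1, hS2, integral_const_mul, lowerPartialMoment]
  ring

lemma lowerPartialMoment_of_nonpos (hP : SelfSimilar P) {s : ℝ} (hs : s ≤ 0) :
    lowerPartialMoment P s = 0 :=
  lowerPartialMoment_eq_zero <| hP.ae_mem_Icc.mono fun _ hx ↦ hs.trans hx.1

lemma lowerPartialMoment_of_one_le (hP : SelfSimilar P) {s : ℝ} (hs : 1 ≤ s) :
    lowerPartialMoment P s = s - 2 / 3 := by
  rw [← hP.mean_eq]
  exact lowerPartialMoment_eq_sub_mean hP.integrable_id <|
    hP.ae_mem_Icc.mono fun _ hx ↦ hx.2.trans hs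

lemma lowerPartialMoment_of_mem_Icc (hP : SelfSimilar P) {s : ℝ}
    (hs : s ∈ Icc (1 / 4) (1 / 2)) : lowerPartialMoment P s = (s - 1 / 6) / 4 := by
  rw [hP.lowerPartialMoment_eq_add, hP.lowerPartialMoment_of_one_le (by linarith [hs.1]),
    hP.lowerPartialMoment_of_nonpos (by linarith [hs.2])]
  ring

lemma lowerPartialMoment_of_half_le (hP : SelfSimilar P) {s : ℝ} (hs : 1 / 2 ≤ s) :
    lowerPartialMoment P s = (s - 1 / 6) / 4 + 3 / 8 * lowerPartialMoment P (2 * s - 1) := by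
  rw [hP.lowerPartialMoment_eq_add, hP.lowerPartialMoment_of_one_le (by linarith)]
  ring

lemma lowerPartialMoment_le_div_three (hP : SelfSimilar P) {s : ℝ} (h₀ : 0 ≤ s) (h₁ : s ≤ 1) :
    lowerPartialMoment P s ≤ s / 3 := by
  have hconv := (convexOn_lowerPartialMoment hP.integrable_id).2 (mem_univ 0) (mem_univ 1)
    (sub_nonneg.2 h₁) h₀ (sub_add_cancel 1 s)
  rw [hP.lowerPartialMoment_of_nonpos le_rfl, hP.lowerPartialMoment_of_one_le le_rfl] at hconv
  simp only [smul_eq_mul, mul_zero, mul_one, zero_add] at hconv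
  linarith

/-- The constant `3 / 8` is sharp: equality holds at `s = 1 / 3`, hence at every `4⁻ⁿ / 3`. -/
lemma lowerPartialMoment_le_sq (hP : SelfSimilar P) {s : ℝ} (hs : 0 < s) :
    lowerPartialMoment P s ≤ 3 / 8 * s ^ 2 := by
  refine le_mul_sq_of_sq_mul_le (r := 4) (y₀ := 1 / 4) (by norm_num) (fun y hy ↦ ?_)
    (fun y _ hy ↦ ?_) hs
  · rcases le_total y (1 / 2) with h | h
    · rw [hP.lowerPartialMoment_of_mem_Icc ⟨hy, h⟩]
      linarith [sq_nonneg (y - 1 / 3)]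
    rcases le_total y 1 with h' | h'
    · have hchord := hP.lowerPartialMoment_le_div_three (s := 2 * y - 1) (by linarith) (by linarith)
      rw [hP.lowerPartialMoment_of_half_le h]
      linarith [sq_nonneg (y - 2 / 3)]
    · rw [hP.lowerPartialMoment_of_one_le h']
      linarith [sq_nonneg (y - 4 / 3)]
  · rw [hP.lowerPartialMoment_eq_add y,
      hP.lowerPartialMoment_of_nonpos (s := 2 * y - 1) (by linarith)]
    linarith

lemma upperPartialMoment_eq (hP : SelfSimilar P) (s : ℝ) :
    upperPartialMoment P s = 2 / 3 - s + lowerPartialMoment P s := by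
  rw [_root_.upperPartialMoment_eq hP.integrable_id, hP.mean_eq]

lemma lowerPartialMoment_mul_upperPartialMoment_lt_of_le_quarter (hP : SelfSimilar P) {s : ℝ}
    (hs : s ≤ 1 / 4) : lowerPartialMoment P s * upperPartialMoment P s < 1 / 48 := by
  rcases le_or_gt s 0 with h | h
  · norm_num [hP.lowerPartialMoment_of_nonpos h]
  · have hsq := hP.lowerPartialMoment_le_sq h
    have hlower : lowerPartialMoment P s ≤ 3 / 128 := by nlinarith
    have hupper : upperPartialMoment P s ≤ 2 / 3 + 3 / 128 := by
      rw [hP.upperPartialMoment_eq]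
      linarith
    calc lowerPartialMoment P s * upperPartialMoment P s
        ≤ 3 / 128 * (2 / 3 + 3 / 128) := by
          gcongr
          exact upperPartialMoment_nonneg P s
      _ < 1 / 48 := by norm_num

lemma lowerPartialMoment_mul_upperPartialMoment_of_mem_Icc (hP : SelfSimilar P) {s : ℝ}
    (hs : s ∈ Icc (1 / 4) (1 / 2)) :
    lowerPartialMoment P s * upperPartialMoment P s = 1 / 48 - 3 / 16 * (s - 1 / 2) ^ 2 := by
  rw [hP.upperPartialMoment_eq, hP.lowerPartialMoment_of_mem_Icc hs]
  ring

lemma lowerPartialMoment_mul_upperPartialMoment_lt_of_half_lt (hP : SelfSimilar P) {s : ℝ}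
    (hs : 1 / 2 < s) : lowerPartialMoment P s * upperPartialMoment P s < 1 / 48 := by
  rcases le_or_gt 1 s with h | h
  · norm_num [hP.upperPartialMoment_eq, hP.lowerPartialMoment_of_one_le h]
  obtain ⟨t, rfl⟩ : ∃ t, s = 1 / 2 + t := ⟨s - 1 / 2, by ring⟩
  have hle : lowerPartialMoment P (1 / 2 + t) ≤ 1 / 12 + t / 4 + 9 / 16 * t ^ 2 := by
    have hsq := hP.lowerPartialMoment_le_sq (s := 2 * (1 / 2 + t) - 1) (by linarith)
    rw [hP.lowerPartialMoment_of_half_le hs.le]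
    linarith
  have hupper : upperPartialMoment P (1 / 2 + t) ≤ 1 / 4 - 3 / 4 * t + 9 / 16 * t ^ 2 := by
    rw [hP.upperPartialMoment_eq]
    linarith
  have ht : 0 < t := by linarith
  have hgap : 0 < t ^ 3 * (9 / 32 - 81 / 256 * t) := mul_pos (by positivity) (by linarith)
  calc lowerPartialMoment P (1 / 2 + t) * upperPartialMoment P (1 / 2 + t)
      ≤ (1 / 12 + t / 4 + 9 / 16 * t ^ 2) * (1 / 4 - 3 / 4 * t + 9 / 16 * t ^ 2) := by
        gcongr
        exact upperPartialMoment_nonneg P _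
    _ = 1 / 48 - t ^ 3 * (9 / 32 - 81 / 256 * t) := by ring
    _ < 1 / 48 := by linarith

lemma lowerPartialMoment_mul_upperPartialMoment_lt (hP : SelfSimilar P) {s : ℝ}
    (hs : s ≠ 1 / 2) : lowerPartialMoment P s * upperPartialMoment P s < 1 / 48 := by
  rcases le_or_gt s (1 / 4) with h₁ | h₁
  · exact hP.lowerPartialMoment_mul_upperPartialMoment_lt_of_le_quarter h₁
  rcases le_or_gt s (1 / 2) with h₂ | h₂
  · rw [hP.lowerPartialMoment_mul_upperPartialMoment_of_mem_Icc ⟨h₁.le, h₂⟩]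
    linarith [sq_pos_of_ne_zero (sub_ne_zero.2 hs)]
  · exact hP.lowerPartialMoment_mul_upperPartialMoment_lt_of_half_lt h₂

end SelfSimilar

theorem stmt_9 (P : Measure ℝ) [IsProbabilityMeasure P] (hP : SelfSimilar P)
    (a₁ a₂ : ℝ) (h : a₁ < a₂)
    (hopt : IsOptimal P 2 ({a₁, a₂} : Finset ℝ)) :
    a₁ = 1 / 6 ∧ a₂ = 5 / 6 := by
  have hle : distortion P {a₁, a₂} ≤ distortion P {1 / 6, 5 / 6} :=
    hopt.distortion_le (by simp) Finset.card_le_two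
  have hlower : lowerPartialMoment P (1 / 2) = 1 / 12 := by
    rw [hP.lowerPartialMoment_of_mem_Icc (by norm_num)]; norm_num
  have hupper : upperPartialMoment P (1 / 2) = 1 / 4 := by
    rw [hP.upperPartialMoment_eq, hlower]; norm_num
  rw [distortion_pair_eq_variance (hP.memLp_id 2) h.le rfl,
    distortion_pair_eq_variance (s := 1 / 2) (hP.memLp_id 2) (by norm_num) (by norm_num),
    hlower, hupper] at hle
  set s := (a₁ + a₂) / 2 with hs
  have hmid : s = 1 / 2 := by
    by_contra hne
    linarith [hP.lowerPartialMoment_mul_upperPartialMoment_lt hne,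
      sq_nonneg (lowerPartialMoment P s + upperPartialMoment P s - (a₂ - a₁) / 2)]
  rw [hmid, hlower, hupper] at hle
  have hradius : 1 / 12 + 1 / 4 - (a₂ - a₁) / 2 = 0 :=
    sq_nonpos_iff _ |>.1 (by linarith)
  constructor <;> linarith
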